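/- Let (L₁, L₂) and (L₁', L₂') be two pairs of 5-dimensional totally isotropic subspaces of V such that dim(L₁ ∩ L₂) = dim(L₁' ∩ L₂'). Then there exists an orthogonal transformation of V, i.e. a linear equivalence f : V ≃ V with B(f(x), f(y)) = B(x, y) for all x, y ∈ V, such that f maps L₁ onto L₁' and L₂ onto L₂'. -/

import Mathlib

noncomputable section

/-!
Call `L` Lagrangian if `L = Lᗮ`. Given Lagrangians `L₁`, `L₂`, start from any complement `C` of `L₁`
that contains a complement of `L₁ ⊓ L₂` in `L₂`. The form pairs `C` perfectly with `L₁`, so there is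
`T : C → L₁` with `B(T c, c') = B(c, c')`, and shearing `C` along `-T/2` gives an isotropic
complement `M` of `L₁`. The shear moves vectors of `C ⊓ L₂` only by elements of `L₁ ⊓ L₂`, so
`L₂ = (L₁ ⊓ L₂) ⊔ (M ⊓ (L₁ ⊓ L₂)ᗮ)`: the pair is determined by `L₁`, `M` and `L₁ ⊓ L₂`.
As `M` is the dual of `L₁`, every linear isomorphism `g : L₁ ≃ L₁'` extends to an isometry taking
`M` to `M'`, and if `g` takes `L₁ ⊓ L₂` to `L₁' ⊓ L₂'`, then this isometry takes `L₂` to `L₂'`.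
-/

open Module

theorem exists_isCompl_inf_sup_inf_eq {α : Type*} [Lattice α] [BoundedOrder α] [IsModularLattice α]
    [ComplementedLattice α] (a b : α) : ∃ c, IsCompl a c ∧ a ⊓ b ⊔ c ⊓ b = b := by
  obtain ⟨d, hd, hsup⟩ :=
    IsModularLattice.exists_disjoint_and_sup_eq (inf_le_right : a ⊓ b ≤ b)
  have hdb : d ≤ b := hsup ▸ le_sup_right
  have hda : Disjoint d a := by
    rw [disjoint_iff, ← inf_eq_left.mpr hdb, inf_assoc, inf_comm b]
    exact hd.symm.eq_bot
  obtain ⟨c, hdc, hc⟩ := hda.exists_isCompl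
  refine ⟨c, hc.symm, le_antisymm (sup_le inf_le_right inf_le_right) ?_⟩
  exact hsup.ge.trans (sup_le_sup_left (le_inf hdc hdb) _)

section Complement

variable {R V V' : Type*} [Ring R] [AddCommGroup V] [Module R V] [AddCommGroup V'] [Module R V']
  {p q : Submodule R V} {p' q' : Submodule R V'}

/-- The direct sum of linear equivalences `p ≃ p'` and `q ≃ q'` between the summands of two
decompositions into complementary submodules. -/
def linearEquivOfIsCompl (h : IsCompl p q) (h' : IsCompl p' q') (a : p ≃ₗ[R] p') (b : q ≃ₗ[R] q') :
    V ≃ₗ[R] V' :=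
  (p.prodEquivOfIsCompl q h).symm ≪≫ₗ a.prodCongr b ≪≫ₗ p'.prodEquivOfIsCompl q' h'

variable {h : IsCompl p q} {h' : IsCompl p' q'} {a : p ≃ₗ[R] p'} {b : q ≃ₗ[R] q'}

@[simp]
theorem linearEquivOfIsCompl_apply_left (x : p) : linearEquivOfIsCompl h h' a b x = a x := by
  simp [linearEquivOfIsCompl]

@[simp]
theorem linearEquivOfIsCompl_apply_right (y : q) : linearEquivOfIsCompl h h' a b y = b y := by
  simp [linearEquivOfIsCompl]

theorem map_eq_of_map_submoduleOf_eq {f : V ≃ₗ[R] V'} (hf : ∀ x : p, f x = a x)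
    {S : Submodule R V} (hS : S ≤ p) {S' : Submodule R V'} (hS' : S' ≤ p')
    (ha : (S.submoduleOf p).map (a : p →ₗ[R] p') = S'.submoduleOf p') :
    S.map (f : V →ₗ[R] V') = S' := by
  have hcomp : (f : V →ₗ[R] V') ∘ₗ p.subtype = p'.subtype ∘ₗ a := LinearMap.ext hf
  calc S.map (f : V →ₗ[R] V')
    _ = ((S.submoduleOf p).map p.subtype).map (f : V →ₗ[R] V') := by
      rw [Submodule.submoduleOf, Submodule.map_comap_subtype, inf_eq_right.mpr hS]
    _ = ((S.submoduleOf p).map (a : p →ₗ[R] p')).map p'.subtype := by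
      rw [← Submodule.map_comp, hcomp, Submodule.map_comp]
    _ = S' := by
      rw [ha, Submodule.submoduleOf, Submodule.map_comap_subtype, inf_eq_right.mpr hS']

theorem map_eq_of_forall_coe {f : V ≃ₗ[R] V'} (hf : ∀ x : p, f x = a x) :
    p.map (f : V →ₗ[R] V') = p' :=
  map_eq_of_map_submoduleOf_eq hf le_rfl le_rfl <| by
    rw [Submodule.submoduleOf_self, Submodule.submoduleOf_self, Submodule.map_top, a.range]

/-- The submodule `{y - T y | y ∈ q}` obtained by shearing `q` along `-T`, where `T` takes values in
another submodule `p`; it replaces one complement `q` of `p` by another. -/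
def shear (T : q →ₗ[R] p) : Submodule R V :=
  LinearMap.range (q.subtype - p.subtype ∘ₗ T)

theorem sub_mem_shear (T : q →ₗ[R] p) (y : q) : (y - T y : V) ∈ shear T :=
  ⟨y, rfl⟩

theorem isCompl_shear (h : IsCompl p q) (T : q →ₗ[R] p) : IsCompl p (shear T) := by
  refine IsCompl.of_le ?_ ?_
  · rintro _ ⟨hp, y, rfl⟩
    have hy : (y : V) ∈ p := by simpa using p.add_mem hp (T y).2
    have hy_zero : y = 0 := Subtype.ext (Submodule.disjoint_def.mp h.disjoint _ hy y.2)
    simp [hy_zero]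
  · rw [← h.sup_eq_top]
    refine sup_le le_sup_left fun y hy ↦ ?_
    exact Submodule.mem_sup.mpr
      ⟨T ⟨y, hy⟩, (T ⟨y, hy⟩).2, _, sub_mem_shear T ⟨y, hy⟩, add_sub_cancel _ _⟩

theorem inf_sup_shear_inf_eq {N : Submodule R V} (hN : p ⊓ N ⊔ q ⊓ N = N) {T : q →ₗ[R] p}
    (hT : ∀ y : q, (y : V) ∈ N → (T y : V) ∈ N) : p ⊓ N ⊔ shear T ⊓ N = N := by
  refine le_antisymm (sup_le inf_le_right inf_le_right) (hN.ge.trans (sup_le le_sup_left ?_))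
  rintro y ⟨hyq, hyN⟩
  have hTy : (T ⟨y, hyq⟩ : V) ∈ N := hT ⟨y, hyq⟩ hyN
  exact Submodule.mem_sup.mpr ⟨T ⟨y, hyq⟩, ⟨(T ⟨y, hyq⟩).2, hTy⟩, y - T ⟨y, hyq⟩,
    ⟨sub_mem_shear T ⟨y, hyq⟩, N.sub_mem hyN hTy⟩, add_sub_cancel _ _⟩

end Complement

theorem exists_linearEquiv_map_submoduleOf_eq {K V V' : Type*} [DivisionRing K]
    [AddCommGroup V] [Module K V] [AddCommGroup V'] [Module K V']
    {L : Submodule K V} {L' : Submodule K V'} [FiniteDimensional K L] [FiniteDimensional K L']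
    (hL : finrank K L = finrank K L') {S : Submodule K V} (hSL : S ≤ L)
    {S' : Submodule K V'} (hSL' : S' ≤ L') (hS : finrank K S = finrank K S') :
    ∃ g : L ≃ₗ[K] L', (S.submoduleOf L).map (g : L →ₗ[K] L') = S'.submoduleOf L' := by
  obtain ⟨P, hP⟩ := (S.submoduleOf L).exists_isCompl
  obtain ⟨P', hP'⟩ := (S'.submoduleOf L').exists_isCompl
  have hfinrank_S : finrank K (S.submoduleOf L) = finrank K (S'.submoduleOf L') := by
    rw [(Submodule.submoduleOfEquivOfLe hSL).finrank_eq, hS,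
      (Submodule.submoduleOfEquivOfLe hSL').finrank_eq]
  have hfinrank_P : finrank K P = finrank K P' := by
    have := Submodule.finrank_add_eq_of_isCompl hP
    have := Submodule.finrank_add_eq_of_isCompl hP'
    lia
  exact ⟨linearEquivOfIsCompl hP hP' (.ofFinrankEq _ _ hfinrank_S) (.ofFinrankEq _ _ hfinrank_P),
    map_eq_of_forall_coe linearEquivOfIsCompl_apply_left⟩

theorem exists_linearEquiv_pairing_eq {R M N M' N' : Type*} [CommRing R]
    [AddCommGroup M] [Module R M] [AddCommGroup N] [Module R N]
    [AddCommGroup M'] [Module R M'] [AddCommGroup N'] [Module R N']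
    (p : M →ₗ[R] N →ₗ[R] R) [p.IsPerfPair] (p' : M' →ₗ[R] N' →ₗ[R] R) [p'.IsPerfPair]
    (g : M ≃ₗ[R] M') : ∃ h : N ≃ₗ[R] N', ∀ x y, p' (g x) (h y) = p x y :=
  ⟨p.flip.toPerfPair ≪≫ₗ g.symm.dualMap ≪≫ₗ p'.flip.toPerfPair.symm, fun x y ↦ by simp⟩

section BilinForm

variable {K V V' : Type*} [Field K] [AddCommGroup V] [Module K V] [AddCommGroup V'] [Module K V']
  {B : LinearMap.BilinForm K V} {B' : LinearMap.BilinForm K V'}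

theorem map_orthogonal (f : B.IsometryEquiv B') (N : Submodule K V) :
    (B.orthogonal N).map (f.toLinearEquiv : V →ₗ[K] V') =
      B'.orthogonal (N.map (f.toLinearEquiv : V →ₗ[K] V')) := by
  ext y
  constructor
  · rintro ⟨x, hx, rfl⟩ _ ⟨n, hn, rfl⟩
    exact (f.map_app x n).trans (hx n hn)
  · intro hy
    obtain ⟨x, rfl⟩ := f.toLinearEquiv.surjective y
    exact ⟨x, fun n hn ↦ (f.map_app x n).symm.trans (hy _ ⟨n, hn, rfl⟩), rfl⟩

theorem shear_le_orthogonal {L C : Submodule K V} (hL : L ≤ B.orthogonal L) {T : C →ₗ[K] L}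
    (hT : ∀ c c' : C, B (T c) c' + B c (T c') = B c c') : shear T ≤ B.orthogonal (shear T) := by
  rintro _ ⟨c', rfl⟩ _ ⟨c, rfl⟩
  have hTT : B (T c) (T c') = 0 := hL (T c').2 _ (T c).2
  simp [hTT, ← hT c c']

/-- The subspace `L` is Lagrangian for `B` if it is its own orthogonal complement. For a
nondegenerate form this means totally isotropic of half the dimension. -/
def IsLagrangian (B : LinearMap.BilinForm K V) (L : Submodule K V) : Prop :=
  B.orthogonal L = L

theorem isLagrangian_of_two_mul_finrank [FiniteDimensional K V] (hB : B.Nondegenerate)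
    {L : Submodule K V} (hL : L ≤ B.orthogonal L) (hdim : 2 * finrank K L = finrank K V) :
    IsLagrangian B L := by
  refine (Submodule.eq_of_le_of_finrank_eq hL ?_).symm
  rw [LinearMap.BilinForm.finrank_orthogonal hB]
  lia

namespace IsLagrangian

variable {L L₁ L₂ C M : Submodule K V}

theorem apply_eq_zero (hL : IsLagrangian B L) {x y : V} (hx : x ∈ L) (hy : y ∈ L) : B x y = 0 :=
  hL.ge hy x hx

theorem mem_of_forall (hL : IsLagrangian B L) {x : V} (hx : ∀ y ∈ L, B y x = 0) : x ∈ L :=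
  hL.le hx

theorem two_mul_finrank [FiniteDimensional K V] (hB : B.Nondegenerate) (hL : IsLagrangian B L) :
    2 * finrank K L = finrank K V := by
  have horth := LinearMap.BilinForm.finrank_orthogonal hB L
  have hle := L.finrank_le
  rw [hL] at horth
  lia

theorem isPerfPair_domRestrict₁₂ [FiniteDimensional K V] (hB : B.Nondegenerate)
    (hL : IsLagrangian B L) (hC : IsCompl L C) : (B.domRestrict₁₂ L C).IsPerfPair := by
  refine .of_injective ((injective_iff_map_eq_zero _).mpr fun x hx ↦ ?_)
    ((injective_iff_map_eq_zero _).mpr fun y hy ↦ ?_)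
  · refine Subtype.ext (hB.1 x fun v ↦ ?_)
    obtain ⟨⟨l, c⟩, rfl⟩ := (L.prodEquivOfIsCompl C hC).surjective v
    have hxc : B x c = 0 := LinearMap.congr_fun hx c
    simp [hL.apply_eq_zero x.2 l.2, hxc]
  · have hyL : (y : V) ∈ L := hL.mem_of_forall fun x hx ↦ LinearMap.congr_fun hy ⟨x, hx⟩
    exact Subtype.ext (Submodule.disjoint_def.mp hC.disjoint _ hyL y.2)

theorem exists_apply_eq_of_isCompl [FiniteDimensional K V] (hB : B.Nondegenerate)
    (hL : IsLagrangian B L) (hC : IsCompl L C) :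
    ∃ T : C →ₗ[K] L, ∀ c c' : C, B (T c) c' = B c c' := by
  have := hL.isPerfPair_domRestrict₁₂ hB hC
  let p := B.domRestrict₁₂ L C
  exact ⟨p.toPerfPair.symm ∘ₗ B.domRestrict₁₂ C C,
    fun c c' ↦ LinearMap.congr_fun (p.apply_symm_toPerfPair_self (B.domRestrict₁₂ C C c)) c'⟩

theorem apply_mem_of_apply_eq (hsymm : B.IsSymm) (hL₁ : IsLagrangian B L₁)
    (hL₂ : IsLagrangian B L₂) (hC : L₁ ⊓ L₂ ⊔ C ⊓ L₂ = L₂) {T : C →ₗ[K] L₁}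
    (hT : ∀ c c' : C, B (T c) c' = B c c') {c : C} (hc : (c : V) ∈ L₂) : (T c : V) ∈ L₂ := by
  refine hL₂.mem_of_forall fun y hy ↦ ?_
  obtain ⟨k, hk, p, hp, rfl⟩ := Submodule.mem_sup.mp (hC.ge hy)
  have hkT : B k (T c) = 0 := hL₁.apply_eq_zero hk.1 (T c).2
  have hTp : B (T c) p = 0 := (hT c ⟨p, hp.1⟩).trans (hL₂.apply_eq_zero hc hp.2)
  rw [map_add, LinearMap.add_apply, hkT, hsymm.eq p, hTp, add_zero]

theorem exists_isCompl_le_orthogonal [FiniteDimensional K V] [NeZero (2 : K)]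
    (hB : B.Nondegenerate) (hsymm : B.IsSymm) (hL₁ : IsLagrangian B L₁) (hL₂ : IsLagrangian B L₂) :
    ∃ M, IsCompl L₁ M ∧ M ≤ B.orthogonal M ∧ L₁ ⊓ L₂ ⊔ M ⊓ L₂ = L₂ := by
  obtain ⟨C, hC, hsup⟩ := exists_isCompl_inf_sup_inf_eq L₁ L₂
  obtain ⟨T, hT⟩ := hL₁.exists_apply_eq_of_isCompl hB hC
  have hhalf : ∀ c c' : C, B (((2⁻¹ : K) • T) c) c' + B c (((2⁻¹ : K) • T) c') = B c c' := by
    intro c c'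
    have hcT : B c (T c') = B c c' := by rw [hsymm.eq, hT, hsymm.eq]
    simp only [LinearMap.smul_apply, Submodule.coe_smul, map_smul, smul_eq_mul, hT, hcT]
    rw [← add_mul, ← two_mul, mul_inv_cancel₀ two_ne_zero, one_mul]
  refine ⟨shear ((2⁻¹ : K) • T), isCompl_shear hC _, shear_le_orthogonal hL₁.ge hhalf,
    inf_sup_shear_inf_eq hsup fun c hc ↦ ?_⟩
  exact L₂.smul_mem _ (hL₁.apply_mem_of_apply_eq hsymm hL₂ hsup hT hc)

theorem inf_sup_inf_orthogonal_inf_eq (hL₂ : IsLagrangian B L₂)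
    (hM : M ≤ B.orthogonal M) (hsup : L₁ ⊓ L₂ ⊔ M ⊓ L₂ = L₂) :
    L₁ ⊓ L₂ ⊔ M ⊓ B.orthogonal (L₁ ⊓ L₂) = L₂ := by
  suffices M ⊓ B.orthogonal (L₁ ⊓ L₂) = M ⊓ L₂ by rw [this, hsup]
  refine le_antisymm (le_inf inf_le_left ?_) (inf_le_inf_left M ?_)
  · rintro x ⟨hxM, hx⟩
    refine hL₂.mem_of_forall fun y hy ↦ ?_
    obtain ⟨k, hk, m, hm, rfl⟩ := Submodule.mem_sup.mp (hsup.ge hy)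
    rw [map_add, LinearMap.add_apply, hx k hk, hM hxM m hm.1, add_zero]
  · exact hL₂.ge.trans (LinearMap.BilinForm.orthogonal_le inf_le_right)

theorem exists_isometryEquiv_extending [FiniteDimensional K V] [FiniteDimensional K V']
    (hB : B.Nondegenerate) (hsymm : B.IsSymm) (hL : IsLagrangian B L)
    (hLM : IsCompl L M) (hM : M ≤ B.orthogonal M)
    (hB' : B'.Nondegenerate) (hsymm' : B'.IsSymm) {L' M' : Submodule K V'}
    (hL' : IsLagrangian B' L') (hLM' : IsCompl L' M') (hM' : M' ≤ B'.orthogonal M')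
    (g : L ≃ₗ[K] L') :
    ∃ f : B.IsometryEquiv B', (∀ x : L, f x = g x) ∧
      M.map (f.toLinearEquiv : V →ₗ[K] V') = M' := by
  have := hL.isPerfPair_domRestrict₁₂ hB hLM
  have := hL'.isPerfPair_domRestrict₁₂ hB' hLM'
  obtain ⟨h, hgh⟩ := exists_linearEquiv_pairing_eq (B.domRestrict₁₂ L M) (B'.domRestrict₁₂ L' M') g
  simp only [LinearMap.domRestrict₁₂_apply] at hgh
  let F := linearEquivOfIsCompl hLM hLM' g h
  have hF : ∀ x y, B' (F x) (F y) = B x y := by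
    intro x y
    obtain ⟨⟨l₁, m₁⟩, rfl⟩ := (L.prodEquivOfIsCompl M hLM).surjective x
    obtain ⟨⟨l₂, m₂⟩, rfl⟩ := (L.prodEquivOfIsCompl M hLM).surjective y
    have hml : B' (h m₁) (g l₂) = B m₁ l₂ := by
      rw [← hsymm'.eq, ← hsymm.eq, hgh]
    simp only [F, Submodule.coe_prodEquivOfIsCompl', linearEquivOfIsCompl_apply_left,
      linearEquivOfIsCompl_apply_right, map_add, LinearMap.add_apply, hgh, hml,
      hL.apply_eq_zero l₁.2 l₂.2, hL'.apply_eq_zero (g l₁).2 (g l₂).2, hM m₂.2 m₁ m₁.2,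
      hM' (h m₂).2 (h m₁) (h m₁).2]
  exact ⟨{ F with map_app' := hF }, linearEquivOfIsCompl_apply_left,
    map_eq_of_forall_coe linearEquivOfIsCompl_apply_right⟩

end IsLagrangian

theorem orthogonal_transitive_on_isotropic_pairs_general
    [FiniteDimensional K V] [FiniteDimensional K V'] [NeZero (2 : K)]
    (hdim : finrank K V = finrank K V')
    (hB : B.Nondegenerate) (hsymm : B.IsSymm) (hB' : B'.Nondegenerate) (hsymm' : B'.IsSymm)
    {L₁ L₂ : Submodule K V} (hL₁ : IsLagrangian B L₁) (hL₂ : IsLagrangian B L₂)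
    {L₁' L₂' : Submodule K V'} (hL₁' : IsLagrangian B' L₁') (hL₂' : IsLagrangian B' L₂')
    (hint : finrank K ↥(L₁ ⊓ L₂) = finrank K ↥(L₁' ⊓ L₂')) :
    ∃ f : B.IsometryEquiv B', L₁.map (f.toLinearEquiv : V →ₗ[K] V') = L₁' ∧
      L₂.map (f.toLinearEquiv : V →ₗ[K] V') = L₂' := by
  obtain ⟨M, hLM, hM, hsup⟩ := hL₁.exists_isCompl_le_orthogonal hB hsymm hL₂
  obtain ⟨M', hLM', hM', hsup'⟩ := hL₁'.exists_isCompl_le_orthogonal hB' hsymm' hL₂'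
  have hfinrank : finrank K L₁ = finrank K L₁' := by
    have := hL₁.two_mul_finrank hB
    have := hL₁'.two_mul_finrank hB'
    lia
  obtain ⟨g, hg⟩ := exists_linearEquiv_map_submoduleOf_eq hfinrank
    (inf_le_left : L₁ ⊓ L₂ ≤ L₁) (inf_le_left : L₁' ⊓ L₂' ≤ L₁') hint
  obtain ⟨f, hfg, hfM⟩ :=
    hL₁.exists_isometryEquiv_extending hB hsymm hLM hM hB' hsymm' hL₁' hLM' hM' g
  have hf_inf : (L₁ ⊓ L₂).map (f.toLinearEquiv : V →ₗ[K] V') = L₁' ⊓ L₂' :=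
    map_eq_of_map_submoduleOf_eq hfg inf_le_left inf_le_left hg
  refine ⟨f, map_eq_of_forall_coe hfg, ?_⟩
  rw [← hL₂.inf_sup_inf_orthogonal_inf_eq hM hsup, ← hL₂'.inf_sup_inf_orthogonal_inf_eq hM' hsup',
    Submodule.map_sup, hf_inf, Submodule.map_inf _ f.toLinearEquiv.injective, map_orthogonal, hfM,
    hf_inf]

end BilinForm

/-- the orthogonal group of a 10-dimensional complex quadratic space acts
transitively on pairs of 5-dimensional totally isotropic subspaces with fixed
intersection dimension. -/
theorem orthogonal_transitive_on_isotropic_pairs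
    (V : Type*) [AddCommGroup V] [Module ℂ V] [FiniteDimensional ℂ V]
    (hdim : Module.finrank ℂ V = 10)
    (B : V →ₗ[ℂ] V →ₗ[ℂ] ℂ)
    (hsymm : ∀ x y, B x y = B y x)
    (hnd : ∀ x, (∀ y, B x y = 0) → x = 0)
    (L₁ L₂ L₁' L₂' : Submodule ℂ V)
    (hd₁ : Module.finrank ℂ ↥L₁ = 5) (hi₁ : ∀ u ∈ L₁, ∀ u' ∈ L₁, B u u' = 0)
    (hd₂ : Module.finrank ℂ ↥L₂ = 5) (hi₂ : ∀ u ∈ L₂, ∀ u' ∈ L₂, B u u' = 0)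
    (hd₁' : Module.finrank ℂ ↥L₁' = 5) (hi₁' : ∀ u ∈ L₁', ∀ u' ∈ L₁', B u u' = 0)
    (hd₂' : Module.finrank ℂ ↥L₂' = 5) (hi₂' : ∀ u ∈ L₂', ∀ u' ∈ L₂', B u u' = 0)
    (hint : Module.finrank ℂ ↥(L₁ ⊓ L₂) = Module.finrank ℂ ↥(L₁' ⊓ L₂')) :
    ∃ f : V ≃ₗ[ℂ] V, (∀ x y, B (f x) (f y) = B x y) ∧
      Submodule.map (f : V →ₗ[ℂ] V) L₁ = L₁' ∧
      Submodule.map (f : V →ₗ[ℂ] V) L₂ = L₂' := by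
  have hB : LinearMap.BilinForm.Nondegenerate B :=
    ⟨hnd, fun y hy ↦ hnd y fun x ↦ (hsymm y x).trans (hy x)⟩
  have hLag : ∀ L : Submodule ℂ V, finrank ℂ L = 5 → (∀ u ∈ L, ∀ u' ∈ L, B u u' = 0) →
      IsLagrangian B L := fun L hd hi ↦
    isLagrangian_of_two_mul_finrank hB (fun u' hu' u hu ↦ hi u hu u' hu') (by lia)
  obtain ⟨f, hf₁, hf₂⟩ := orthogonal_transitive_on_isotropic_pairs_general rfl hB ⟨hsymm⟩ hB ⟨hsymm⟩
    (hLag L₁ hd₁ hi₁) (hLag L₂ hd₂ hi₂) (hLag L₁' hd₁' hi₁') (hLag L₂' hd₂' hi₂') hint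
  exact ⟨f.toLinearEquiv, f.map_app', hf₁, hf₂⟩

end
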